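/- arXiv:2310.13462 — 3 statements merged into one kernel-verified Lean document; each statement's English description precedes it below -/
import Mathlib

section
/- Let P, H ∈ ℂ^{n×n} with H arbitrary, and define the doubling recursion H_0 = H, H_{k+1} = P^{2^k} H_k (P^{2^k})* + H_k for k ≥ 0. Then for every s ≥ 0 the recursion has the closed form H_s = Σ_{m=0}^{2^s−1} P^m H (P^m)* (the discrete variation-of-constants formula for the doubled Gramian iterates). -/
open scoped Matrix

/-- Closed form of the doubling recursion `H_0 = H`,
`H_{k+1} = P^{2^k} H_k (P^{2^k})ᴴ + H_k`:
for every `s`, `H_s = Σ_{m=0}^{2^s-1} P^m H (P^m)ᴴ`. -/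
theorem doubling_closed_form {n : ℕ} (P H : Matrix (Fin n) (Fin n) ℂ)
    (Hseq : ℕ → Matrix (Fin n) (Fin n) ℂ)
    (h0 : Hseq 0 = H)
    (hrec : ∀ k : ℕ, Hseq (k + 1) = P ^ (2 ^ k) * Hseq k * (P ^ (2 ^ k))ᴴ + Hseq k) :
    ∀ s : ℕ, Hseq s = ∑ m ∈ Finset.range (2 ^ s), P ^ m * H * (P ^ m)ᴴ := by
  intro s
  induction s with
  | zero => simp [h0]
  | succ k ih =>
    -- Split the range at `2 ^ k`; conjugating the first half by `P ^ (2 ^ k)` gives the second.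
    rw [hrec k, ih, pow_succ 2 k, mul_two, Finset.sum_range_add, add_comm, Finset.mul_sum,
      Finset.sum_mul]
    congr 1
    refine Finset.sum_congr rfl fun m _ => ?_
    simp only [pow_add, Matrix.conjTranspose_mul, Matrix.mul_assoc]
end

section
/- For every q ≥ 1, the diagonal Padé numerator N_q and denominator D_q (with D_q(z) = N_q(−z)) have no zeros in common: there is no z ∈ ℂ with N_q(z) = 0 and D_q(z) = 0. -/
/-!
Clearing the normalising constant, `P_q(z) = ((2q)!/q!) N_q(z) = ∑ (2q-j)!/(j!(q-j)!) z^j` satisfies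
the three-term recurrence `P_{q+2}(z) = (4q+6) P_{q+1}(z) + z² P_q(z)` (`padeScaled_rec`), which is
invariant under `z ↦ -z`. Hence the Casoratian `P_{q+1}(z) P_q(-z) - P_{q+1}(-z) P_q(z)` of the two
solutions `P_q(z)`, `P_q(-z)` is multiplied by `-z²` at each step, and equals `2z (-z²)^q`
(`padeScaled_casoratian`). At a common zero of `P_{q+1}(z)` and `P_{q+1}(-z)` it vanishes, so
`z = 0`; but `P_{q+1}(0) ≠ 0`.
-/


/-- Degree-`q` diagonal Padé numerator of the exponential:
`N_q(z) = Σ_{j=0}^{q} [(2q-j)!·q! / ((2q)!·j!·(q-j)!)]·z^j`. -/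
noncomputable def padeNs (q : ℕ) (z : ℂ) : ℂ :=
  ∑ j ∈ Finset.range (q + 1),
    ((((2 * q - j).factorial * q.factorial : ℕ) : ℂ) /
      (((2 * q).factorial * j.factorial * (q - j).factorial : ℕ) : ℂ)) * z ^ j

/-- Degree-`q` diagonal Padé denominator: `D_q(z) = N_q(−z)`. -/
noncomputable def padeDs (q : ℕ) (z : ℂ) : ℂ :=
  padeNs q (-z)

/-- The Padé numerator with its normalising constant removed: `((2q)!/q!) · N_q(z)`. -/
noncomputable def padeScaled (q : ℕ) (z : ℂ) : ℂ :=
  ∑ j ∈ Finset.range (q + 1),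
    (((2 * q - j).factorial : ℂ) / ((j.factorial : ℂ) * ((q - j).factorial : ℂ))) * z ^ j

theorem padeNs_eq (q : ℕ) (z : ℂ) :
    padeNs q z = ((q.factorial : ℂ) / ((2 * q).factorial : ℂ)) * padeScaled q z := by
  unfold padeNs padeScaled
  rw [Finset.mul_sum]
  refine Finset.sum_congr rfl fun j _ => ?_
  push_cast
  ring

theorem padeScaled_zero_right (q : ℕ) : padeScaled q 0 ≠ 0 := by
  unfold padeScaled
  rw [Finset.sum_range_succ']
  simp [Nat.factorial_ne_zero]

/-- The coefficient form of the recurrence away from the leading term, in the parametrisation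
`q = j + m + 1`, where no truncated subtraction occurs. -/
theorem padeScaled_coeff_rec (j m : ℕ) :
    (((j + 2 * m + 4).factorial : ℂ) / (((j + 2).factorial : ℂ) * ((m + 1).factorial : ℂ))) =
      (4 * ((j + m + 1 : ℕ) : ℂ) + 6) *
        (((j + 2 * m + 2).factorial : ℂ) / (((j + 2).factorial : ℂ) * (m.factorial : ℂ))) +
      ((j + 2 * m + 2).factorial : ℂ) / ((j.factorial : ℂ) * ((m + 1).factorial : ℂ)) := by
  have hj : (j.factorial : ℂ) ≠ 0 := Nat.cast_ne_zero.2 j.factorial_ne_zero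
  have hm : (m.factorial : ℂ) ≠ 0 := Nat.cast_ne_zero.2 m.factorial_ne_zero
  have h1 : (j : ℂ) + 1 ≠ 0 := by exact_mod_cast j.succ_ne_zero
  have h2 : (j : ℂ) + 1 + 1 ≠ 0 := by exact_mod_cast (j + 1).succ_ne_zero
  have h3 : (m : ℂ) + 1 ≠ 0 := by exact_mod_cast m.succ_ne_zero
  rw [Nat.factorial_succ (j + 2 * m + 3), Nat.factorial_succ (j + 2 * m + 2),
    Nat.factorial_succ (j + 1), Nat.factorial_succ j, Nat.factorial_succ m]
  generalize (j + 2 * m + 2).factorial = F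
  push_cast
  field_simp
  ring

theorem padeScaled_rec (q : ℕ) (z : ℂ) :
    padeScaled (q + 2) z = (4 * (q : ℂ) + 6) * padeScaled (q + 1) z + z ^ 2 * padeScaled q z := by
  have hq : (q.factorial : ℂ) ≠ 0 := Nat.cast_ne_zero.2 q.factorial_ne_zero
  have h1 : (q : ℂ) + 1 ≠ 0 := by exact_mod_cast q.succ_ne_zero
  have h2 : (q : ℂ) + 1 + 1 ≠ 0 := by exact_mod_cast (q + 1).succ_ne_zero
  unfold padeScaled
  -- The terms of degree 0, 1 and `q + 2` are split off; the rest is compared degree by degree.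
  rw [Finset.sum_range_succ _ (q + 2), Finset.sum_range_succ' _ (q + 1), Finset.sum_range_succ' _ q,
    Finset.sum_range_succ' _ (q + 1), Finset.sum_range_succ' _ q, Finset.sum_range_succ _ q]
  have hmid : ∑ k ∈ Finset.range q,
      ((2 * (q + 2) - (k + 1 + 1)).factorial : ℂ) /
        (((k + 1 + 1).factorial : ℂ) * ((q + 2 - (k + 1 + 1)).factorial : ℂ)) * z ^ (k + 1 + 1) =
      (4 * (q : ℂ) + 6) * ∑ k ∈ Finset.range q,
        ((2 * (q + 1) - (k + 1 + 1)).factorial : ℂ) /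
        (((k + 1 + 1).factorial : ℂ) * ((q + 1 - (k + 1 + 1)).factorial : ℂ)) * z ^ (k + 1 + 1) +
      z ^ 2 * ∑ k ∈ Finset.range q,
        ((2 * q - k).factorial : ℂ) / ((k.factorial : ℂ) * ((q - k).factorial : ℂ)) * z ^ k := by
    rw [Finset.mul_sum, Finset.mul_sum, ← Finset.sum_add_distrib]
    refine Finset.sum_congr rfl fun k hk => ?_
    obtain ⟨m, rfl⟩ : ∃ m, q = k + m + 1 := ⟨q - k - 1, by have := Finset.mem_range.1 hk; omega⟩
    rw [show 2 * (k + m + 1 + 2) - (k + 1 + 1) = k + 2 * m + 4 by omega,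
      show k + m + 1 + 2 - (k + 1 + 1) = m + 1 by omega,
      show 2 * (k + m + 1 + 1) - (k + 1 + 1) = k + 2 * m + 2 by omega,
      show k + m + 1 + 1 - (k + 1 + 1) = m by omega,
      show 2 * (k + m + 1) - k = k + 2 * m + 2 by omega,
      show k + m + 1 - k = m + 1 by omega, padeScaled_coeff_rec]
    ring
  have hlow0 : ((2 * (q + 2) - 0).factorial : ℂ) /
        ((Nat.factorial 0 : ℂ) * ((q + 2 - 0).factorial : ℂ)) =
      (4 * (q : ℂ) + 6) * (((2 * (q + 1) - 0).factorial : ℂ) /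
        ((Nat.factorial 0 : ℂ) * ((q + 1 - 0).factorial : ℂ))) := by
    rw [show 2 * (q + 2) - 0 = 2 * q + 3 + 1 by omega, show 2 * (q + 1) - 0 = 2 * q + 2 by omega,
      Nat.sub_zero, Nat.sub_zero, Nat.factorial_succ (2 * q + 3), Nat.factorial_succ (2 * q + 2),
      Nat.factorial_succ (q + 1), Nat.factorial_succ q]
    generalize (2 * q + 2).factorial = F
    push_cast
    simp only [Nat.factorial_zero, Nat.cast_one]
    field_simp
    ring
  have hlow1 : ((2 * (q + 2) - (0 + 1)).factorial : ℂ) /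
        (((0 + 1).factorial : ℂ) * ((q + 2 - (0 + 1)).factorial : ℂ)) =
      (4 * (q : ℂ) + 6) * (((2 * (q + 1) - (0 + 1)).factorial : ℂ) /
        (((0 + 1).factorial : ℂ) * ((q + 1 - (0 + 1)).factorial : ℂ))) := by
    rw [show 2 * (q + 2) - (0 + 1) = 2 * q + 1 + 1 + 1 by omega,
      show 2 * (q + 1) - (0 + 1) = 2 * q + 1 by omega,
      show q + 2 - (0 + 1) = q + 1 by omega, show q + 1 - (0 + 1) = q by omega,
      Nat.factorial_succ (2 * q + 1 + 1), Nat.factorial_succ (2 * q + 1), Nat.factorial_succ q]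
    generalize (2 * q + 1).factorial = F
    push_cast
    simp only [Nat.factorial_one, Nat.cast_one]
    field_simp
    ring
  have htop : ((2 * (q + 2) - (q + 2)).factorial : ℂ) /
        (((q + 2).factorial : ℂ) * ((q + 2 - (q + 2)).factorial : ℂ)) =
      ((2 * q - q).factorial : ℂ) / ((q.factorial : ℂ) * ((q - q).factorial : ℂ)) := by
    have hq2 : ((q + 2).factorial : ℂ) ≠ 0 := Nat.cast_ne_zero.2 (q + 2).factorial_ne_zero
    rw [show 2 * (q + 2) - (q + 2) = q + 2 by omega, show 2 * q - q = q by omega]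
    simp [hq, hq2]
  rw [hmid, hlow0, hlow1, htop]
  ring

theorem padeScaled_casoratian (q : ℕ) (z : ℂ) :
    padeScaled (q + 1) z * padeScaled q (-z) - padeScaled (q + 1) (-z) * padeScaled q z =
      2 * z * (-z ^ 2) ^ q := by
  induction q with
  | zero =>
    simp [padeScaled, Finset.sum_range_succ]
    ring
  | succ q ih =>
    rw [padeScaled_rec, padeScaled_rec, pow_succ (-z ^ 2) q, ← mul_assoc, ← ih]
    ring

/-- For every `q ≥ 1`, the diagonal Padé numerator `N_q` and denominator `D_q`
have no common zeros. -/
theorem pade_no_common_zeros (q : ℕ) (hq : 1 ≤ q) :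
    ¬∃ z : ℂ, padeNs q z = 0 ∧ padeDs q z = 0 := by
  rintro ⟨z, hN, hD⟩
  obtain ⟨p, rfl⟩ : ∃ p, q = p + 1 := ⟨q - 1, by omega⟩
  have hc : (((p + 1).factorial : ℂ) / ((2 * (p + 1)).factorial : ℂ)) ≠ 0 :=
    div_ne_zero (Nat.cast_ne_zero.2 (Nat.factorial_ne_zero _))
      (Nat.cast_ne_zero.2 (Nat.factorial_ne_zero _))
  rw [padeDs, padeNs_eq] at hD
  rw [padeNs_eq] at hN
  have hN' := (mul_eq_zero.1 hN).resolve_left hc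
  have hD' := (mul_eq_zero.1 hD).resolve_left hc
  have hW := padeScaled_casoratian p z
  rw [hN', hD', zero_mul, zero_mul, sub_zero] at hW
  have hz : z = 0 := by
    by_contra hz
    exact mul_ne_zero (mul_ne_zero two_ne_zero hz)
      (pow_ne_zero _ (neg_ne_zero.2 (pow_ne_zero _ hz))) hW.symm
  subst hz
  exact padeScaled_zero_right _ hN'
end

section
/- Let q ≥ 1 and s ≥ 1 be integers, let N, D ∈ ℂ[z] be polynomials of degree exactly q with no common roots, and let L_0, L_1, …, L_q ∈ ℂ[z] be linearly independent polynomials each of degree at most q. Then the span over ℂ of the set { N^m · D^{2^s − 1 − m} · L_k : 0 ≤ m ≤ 2^s − 1, 0 ≤ k ≤ q } has dimension exactly q·2^s + 1. -/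
/-!
With `n = 2 ^ s - 1`, the span is the whole space of polynomials of degree at most `q * (n + 1)`.
One inclusion is a degree count. The other is by induction on `n`. For `n = 0` the `L k` are
`q + 1` linearly independent elements of a space of dimension `q + 1`, hence span it
(`mem_span_range_of_degree_lt`). For the step, `N` and `D` are coprime, so a polynomial `f` with
`deg f ≤ q * (n + 2)` can be written `f = N * u + D * v`; reducing `v` modulo `N` gives `deg v < q`
and therefore `deg u ≤ q * (n + 1)` (`exists_mul_add_mul_eq`), and the induction hypothesis applies
to both `u` and `v`.
-/

open Polynomial

/-- The span of the products `N ^ m * D ^ (n - m) * L k` with `m ≤ n`. -/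
noncomputable def padeSpan {K ι : Type*} [Field K] (N D : K[X]) (L : ι → K[X]) (n : ℕ) : Submodule K K[X] :=
  Submodule.span K {p : K[X] | ∃ m : ℕ, m ≤ n ∧ ∃ k : ι, p = N ^ m * D ^ (n - m) * L k}

lemma finrank_degreeLT {K : Type*} [Field K] (n : ℕ) :
    Module.finrank K (degreeLT K n) = n := by
  rw [(degreeLTEquiv K n).finrank_eq, Module.finrank_fin_fun]

lemma mem_span_range_of_degree_lt {K : Type*} [Field K] {d : ℕ} {L : Fin d → K[X]}
    (hL : LinearIndependent K L) (hLdeg : ∀ k, (L k).degree < (d : ℕ)) {f : K[X]}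
    (hf : f.degree < (d : ℕ)) : f ∈ Submodule.span K (Set.range L) := by
  have hfin : Module.Finite K (degreeLT K d) :=
    Module.Finite.equiv (degreeLTEquiv K d).symm
  have hle : Submodule.span K (Set.range L) ≤ degreeLT K d := by
    rw [Submodule.span_le]
    rintro _ ⟨k, rfl⟩
    exact mem_degreeLT.2 (hLdeg k)
  have heq : Submodule.span K (Set.range L) = degreeLT K d := by
    apply Submodule.eq_of_le_of_finrank_eq hle
    rw [finrank_span_eq_card hL, Fintype.card_fin, finrank_degreeLT]
  rw [heq]
  exact mem_degreeLT.2 hf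

/-- A Bézout decomposition of `f` with degree control on both cofactors. -/
lemma exists_mul_add_mul_eq {K : Type*} [Field K] {N D f : K[X]} {q r : ℕ}
    (hN : N.degree = (q : ℕ)) (hD : D.degree = (q : ℕ)) (hND : IsCoprime N D)
    (hqr : q ≤ r) (hf : f.degree < (q + r + 1 : ℕ)) :
    ∃ u v : K[X], f = N * u + D * v ∧ u.degree < (r + 1 : ℕ) ∧ v.degree < (r + 1 : ℕ) := by
  obtain ⟨a, b, hab⟩ := hND
  have hN0 : N ≠ 0 := by
    rintro rfl
    simp at hN
  have hv : (f * b % N).degree < (q : ℕ) := hN ▸ EuclideanDomain.mod_lt (f * b) hN0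
  have hdiv : N * (f * b / N) + f * b % N = f * b := EuclideanDomain.div_add_mod _ _
  have hfu : f = N * (f * a + D * (f * b / N)) + D * (f * b % N) := by
    linear_combination (-f) * hab - D * hdiv
  refine ⟨_, _, hfu, ?_, hv.trans_le (by exact_mod_cast (by omega : q ≤ r + 1))⟩
  generalize f * a + D * (f * b / N) = u at hfu ⊢
  generalize f * b % N = v at hfu hv
  by_cases hu : u = 0
  · simp [hu]
  have hDv : (D * v).degree < (q + r + 1 : ℕ) := by
    by_cases h : v = 0
    · simp [h]
    rw [degree_mul, hD, degree_eq_natDegree h]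
    rw [degree_eq_natDegree h] at hv
    norm_cast at hv ⊢
    omega
  have hNu : (N * u).degree < (q + r + 1 : ℕ) := by
    rw [show N * u = f - D * v by rw [hfu]; ring]
    exact (degree_sub_le _ _).trans_lt (max_lt hf hDv)
  rw [degree_mul, hN, degree_eq_natDegree hu] at hNu
  rw [degree_eq_natDegree hu]
  norm_cast at hNu ⊢
  omega

lemma mul_mem_padeSpan_succ {K ι : Type*} [Field K] {N D : K[X]} {L : ι → K[X]} {n : ℕ}
    {f : K[X]} (hf : f ∈ padeSpan N D L n) :
    N * f ∈ padeSpan N D L (n + 1) ∧ D * f ∈ padeSpan N D L (n + 1) := by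
  refine Submodule.span_induction ?_ (by simp) ?_ ?_ hf
  · rintro _ ⟨m, hm, k, rfl⟩
    refine ⟨Submodule.subset_span ⟨m + 1, by omega, k, ?_⟩,
      Submodule.subset_span ⟨m, by omega, k, ?_⟩⟩
    · rw [show n + 1 - (m + 1) = n - m by omega]
      ring
    · rw [show n + 1 - m = n - m + 1 by omega]
      ring
  · rintro x y - - ⟨hx, hx'⟩ ⟨hy, hy'⟩
    rw [mul_add, mul_add]
    exact ⟨add_mem hx hy, add_mem hx' hy'⟩
  · rintro c x - ⟨hx, hx'⟩
    rw [mul_smul_comm, mul_smul_comm]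
    exact ⟨Submodule.smul_mem _ c hx, Submodule.smul_mem _ c hx'⟩

lemma mem_padeSpan_of_degree_lt {K : Type*} [Field K] {N D : K[X]} {q : ℕ}
    (hN : N.degree = (q : ℕ)) (hD : D.degree = (q : ℕ)) (hND : IsCoprime N D)
    {L : Fin (q + 1) → K[X]} (hL : LinearIndependent K L)
    (hLdeg : ∀ k, (L k).degree < (q + 1 : ℕ)) (n : ℕ) (f : K[X])
    (hf : f.degree < (q * (n + 1) + 1 : ℕ)) : f ∈ padeSpan N D L n := by
  induction n generalizing f with
  | zero =>
    refine Submodule.span_mono ?_ (mem_span_range_of_degree_lt hL hLdeg (by simpa using hf))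
    rintro _ ⟨k, rfl⟩
    exact ⟨0, le_rfl, k, by simp⟩
  | succ n ih =>
    obtain ⟨u, v, rfl, hu, hv⟩ := exists_mul_add_mul_eq (r := q * (n + 1)) hN hD hND
      (Nat.le_mul_of_pos_right q n.succ_pos)
      (by rwa [show q + q * (n + 1) + 1 = q * (n + 1 + 1) + 1 by ring])
    exact add_mem (mul_mem_padeSpan_succ (ih u hu)).1 (mul_mem_padeSpan_succ (ih v hv)).2

lemma padeSpan_le_degreeLT {K ι : Type*} [Field K] {N D : K[X]} {q : ℕ}
    (hN : N.degree = (q : ℕ)) (hD : D.degree = (q : ℕ))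
    {L : ι → K[X]} (hLdeg : ∀ k, (L k).degree ≤ (q : ℕ)) (n : ℕ) :
    padeSpan N D L n ≤ degreeLT K (q * (n + 1) + 1) := by
  refine Submodule.span_le.2 ?_
  rintro _ ⟨m, hm, k, rfl⟩
  refine mem_degreeLT.2 (lt_of_le_of_lt (b := ((q * (n + 1) : ℕ) : WithBot ℕ)) ?_
    (by exact_mod_cast Nat.lt_succ_self _))
  obtain ⟨j, rfl⟩ := Nat.exists_eq_add_of_le hm
  rw [← natDegree_le_iff_degree_le]
  have h1 := natDegree_pow_le_of_le m (natDegree_eq_of_degree_eq_some hN).le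
  have h2 := natDegree_pow_le_of_le j (natDegree_eq_of_degree_eq_some hD).le
  have h3 := natDegree_mul_le_of_le (natDegree_mul_le_of_le h1 h2)
    (natDegree_le_iff_degree_le.2 (hLdeg k))
  rw [Nat.add_sub_cancel_left]
  exact h3.trans (le_of_eq (by ring))

/-- Let `N, D ∈ ℂ[z]` have degree exactly `q` with no common roots, and let
`L_0, …, L_q ∈ ℂ[z]` be linearly independent polynomials of degree at most `q`.
Then `span ℂ { N^m · D^{2^s−1−m} · L_k : 0 ≤ m ≤ 2^s−1, 0 ≤ k ≤ q }` has
dimension exactly `q·2^s + 1`. -/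
theorem pade_products_span_dimension (q s : ℕ) (hq : 1 ≤ q) (hs : 1 ≤ s)
    (N D : Polynomial ℂ)
    (hNdeg : N.degree = (q : ℕ)) (hDdeg : D.degree = (q : ℕ))
    (hroots : ∀ z : ℂ, ¬(N.IsRoot z ∧ D.IsRoot z))
    (L : Fin (q + 1) → Polynomial ℂ) (hL : LinearIndependent ℂ L)
    (hLdeg : ∀ k : Fin (q + 1), (L k).degree ≤ (q : ℕ)) :
    Module.finrank ℂ
      ↥(Submodule.span ℂ
        {p : Polynomial ℂ |
          ∃ m : ℕ, m ≤ 2 ^ s - 1 ∧ ∃ k : Fin (q + 1),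
            p = N ^ m * D ^ (2 ^ s - 1 - m) * L k}) = q * 2 ^ s + 1 := by
  have hND : IsCoprime N D := by
    rw [Polynomial.isCoprime_iff_aeval_ne_zero_of_isAlgClosed ℂ ℂ]
    intro z
    by_contra! h
    exact hroots z ⟨by simpa using h.1, by simpa using h.2⟩
  have hLlt : ∀ k, (L k).degree < (q + 1 : ℕ) := fun k =>
    (hLdeg k).trans_lt (by exact_mod_cast q.lt_succ_self)
  have heq : padeSpan N D L (2 ^ s - 1) = degreeLT ℂ (q * 2 ^ s + 1) := by
    have h2 : 2 ^ s - 1 + 1 = 2 ^ s := Nat.sub_add_cancel Nat.one_le_two_pow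
    refine le_antisymm ?_ fun f hf => ?_
    · simpa only [h2] using padeSpan_le_degreeLT hNdeg hDdeg hLdeg (2 ^ s - 1)
    · refine mem_padeSpan_of_degree_lt hNdeg hDdeg hND hL hLlt _ f ?_
      rw [h2]
      exact mem_degreeLT.1 hf
  change Module.finrank ℂ (padeSpan N D L (2 ^ s - 1)) = _
  rw [heq, finrank_degreeLT]
end
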